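/- arXiv:1111.1011 — 2 statements merged into one kernel-verified Lean document; each statement's English description precedes it below -/
import Mathlib

section
/- Let M=(Q,Γ,Δ,q₀,γ₀) be a DCFS, k∈ℕ, and M' the switch-number-recording DCFS constructed from M and k. If c_init^M→*c in T_{[0,k]}(M), then there is a run c_init^{M'}→*c' in T(M') where c' is the configuration of M' determined by: State(c')=State(c); Active(c')=⊥ if Active(c)=⊥, and Active(c')=((w,i),i) if Active(c)=(w,i) with w∈Γ∪{ε} and i∈{0,…,k}; Idle(c')(((w',j'),j'))=Idle(c)((w',j')) for all w'∈Γ∪{ε} and j'∈{0,…,k+1}, and Idle(c') equals 0 on every other local configuration of M'. -/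
namespace DCPSFormal

/-- Rules of a dynamic network of concurrent pushdown systems (DCPS):
creation rules `⟨q,γ⟩ → ⟨q',u⟩ ▷ α` (with `α = none` meaning `ε`),
interruption rules `⟨q,γ⟩ ↦ ⟨q',u⟩`, and resumption rules `q ↦ q' ◁ γ`. -/
inductive Rule (Q Γ : Type*) where
  | cr : Q → Γ → Q → List Γ → Option Γ → Rule Q Γ
  | intr : Q → Γ → Q → List Γ → Rule Q Γ
  | res : Q → Γ → Q → Rule Q Γ

/-- A DCPS: a set of rules, an initial state and an initial stack symbol. -/
structure DCPS (Q Γ : Type*) where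
  rules : Set (Rule Q Γ)
  q0 : Q
  γ0 : Γ

/-- Well-formedness of a DCPS: every pushed word has length at most 2. -/
def IsDCPSWf {Q Γ : Type*} (M : DCPS Q Γ) : Prop :=
  ∀ r ∈ M.rules,
    match r with
    | .cr _ _ _ u _ => u.length ≤ 2
    | .intr _ _ _ u => u.length ≤ 2
    | .res _ _ _ => True

/-- A DCFS is a DCPS in which every pushed word has length at most 1. -/
def IsDCFS {Q Γ : Type*} (M : DCPS Q Γ) : Prop :=
  ∀ r ∈ M.rules,
    match r with
    | .cr _ _ _ u _ => u.length ≤ 1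
    | .intr _ _ _ u => u.length ≤ 1
    | .res _ _ _ => True

/-- A configuration of a DCPS: global state, optional active local configuration
(stack content and switch number), and a finitely supported multiset of pending
local configurations. -/
structure Config (Q Γ : Type*) where
  state : Q
  active : Option (List Γ × ℕ)
  idle : (List Γ × ℕ) →₀ ℕ

/-- The thread possibly spawned by a creation rule with creation component `α`
when the active thread has switch number `i`. -/
noncomputable def spawnOf {Γ : Type*} (α : Option Γ) (i : ℕ) : (List Γ × ℕ) →₀ ℕ :=
  match α with
  | none => 0
  | some a => Finsupp.single ([a], i + 1) 1

/-- The transition system `T(M)` of a DCPS, with steps labelled by rules. -/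
inductive Step {Q Γ : Type*} (M : DCPS Q Γ) : Rule Q Γ → Config Q Γ → Config Q Γ → Prop
  | cr {q γ q' u α w i V} :
      Rule.cr q γ q' u α ∈ M.rules →
      Step M (.cr q γ q' u α) ⟨q, some (γ :: w, i), V⟩ ⟨q', some (u ++ w, i), V + spawnOf α i⟩
  | intr {q γ q' u w i V} :
      Rule.intr q γ q' u ∈ M.rules →
      Step M (.intr q γ q' u) ⟨q, some (γ :: w, i), V⟩
        ⟨q', none, V + Finsupp.single (u ++ w, i + 1) 1⟩
  | res {q γ q' w i V} :
      Rule.res q γ q' ∈ M.rules →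
      Step M (.res q γ q') ⟨q, none, V + Finsupp.single (γ :: w, i) 1⟩ ⟨q', some (γ :: w, i), V⟩

/-- `c ∈ Conf_I(M)`: the active thread exists and its switch number lies in `I`. -/
def ActiveIn {Q Γ : Type*} (I : Set ℕ) (c : Config Q Γ) : Prop :=
  ∃ w i, c.active = some (w, i) ∧ i ∈ I

/-- The `I`-bounded transition system `T_I(M)`. -/
def StepIn {Q Γ : Type*} (M : DCPS Q Γ) (I : Set ℕ) (r : Rule Q Γ) (c c' : Config Q Γ) : Prop :=
  Step M r c c' ∧ (ActiveIn I c ∨ ActiveIn I c')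

/-- Reachability in `T(M)`. -/
def Reaches {Q Γ : Type*} (M : DCPS Q Γ) : Config Q Γ → Config Q Γ → Prop :=
  Relation.ReflTransGen (fun a b => ∃ r, Step M r a b)

/-- Reachability in `T_I(M)`. -/
def ReachesIn {Q Γ : Type*} (M : DCPS Q Γ) (I : Set ℕ) : Config Q Γ → Config Q Γ → Prop :=
  Relation.ReflTransGen (fun a b => ∃ r, StepIn M I r a b)

/-- The initial configuration of a DCPS. -/
noncomputable def initConfig {Q Γ : Type*} (M : DCPS Q Γ) : Config Q Γ :=
  ⟨M.q0, none, Finsupp.single ([M.γ0], 0) 1⟩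

/-- `q` is reachable by `M`. -/
def StateReachable {Q Γ : Type*} (M : DCPS Q Γ) (q : Q) : Prop :=
  ∃ c, Reaches M (initConfig M) c ∧ c.active = none ∧ c.state = q

/-- `q` is `k`-bounded reachable by `M`. -/
def KBoundedReachable {Q Γ : Type*} (M : DCPS Q Γ) (k : ℕ) (q : Q) : Prop :=
  ∃ c, ReachesIn M {i | i ≤ k} (initConfig M) c ∧ c.active = none ∧ c.state = q

/-- `q` is `k`-stratified reachable by `M`. -/
def KStratifiedReachable {Q Γ : Type*} (M : DCPS Q Γ) (k : ℕ) (q : Q) : Prop :=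
  ∃ c : ℕ → Config Q Γ, c 0 = initConfig M ∧
    (∀ l ≤ k, ReachesIn M {l} (c l) (c (l + 1))) ∧
    (c (k + 1)).active = none ∧ (c (k + 1)).state = q

/-- A labelled run in a labelled transition system. -/
inductive LRun {C L : Type*} (step : L → C → C → Prop) : List L → C → C → Prop
  | nil (c) : LRun step [] c c
  | cons {l τ c c' c''} : step l c c' → LRun step τ c' c'' → LRun step (l :: τ) c c''

/-- A pushdown automaton with states `S`, input alphabet `A` and stack alphabet `Γ`. -/
structure PDA (S A Γ : Type*) where
  trans : Set ((S × Γ) × Option A × (S × List Γ))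
  p0 : S
  γ0 : Γ
  final : Set S

/-- A single (possibly `ε`-labelled) step of a PDA. -/
inductive PDAStep {S A Γ : Type*} (P : PDA S A Γ) :
    Option A → (S × List Γ) → (S × List Γ) → Prop
  | mk {p γ a p' u w} : ((p, γ), a, (p', u)) ∈ P.trans →
      PDAStep P a (p, γ :: w) (p', u ++ w)

/-- A run of a PDA labelled by the word obtained by concatenating all non-`ε` labels. -/
inductive PDATrace {S A Γ : Type*} (P : PDA S A Γ) :
    List A → (S × List Γ) → (S × List Γ) → Prop
  | nil (c) : PDATrace P [] c c
  | eps {v c c' c''} : PDAStep P none c c' → PDATrace P v c' c'' → PDATrace P v c c''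
  | cons {a v c c' c''} : PDAStep P (some a) c c' → PDATrace P v c' c'' →
      PDATrace P (a :: v) c c''

/-- The language of a PDA (acceptance by final state). -/
def PDALang {S A Γ : Type*} (P : PDA S A Γ) : Set (List A) :=
  { v | ∃ p w, p ∈ P.final ∧ PDATrace P v (P.p0, [P.γ0]) (p, w) }

/-- A finite state automaton. -/
structure FSA (S A : Type*) where
  trans : Set (S × Option A × S)
  init : Set S
  final : Set S

/-- A run of an FSA labelled by a word (`ε`-labels contribute nothing). -/
inductive FSARun {S A : Type*} (Au : FSA S A) : List A → S → S → Prop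
  | nil (s) : FSARun Au [] s s
  | eps {v s s' s''} : (s, none, s') ∈ Au.trans → FSARun Au v s' s'' → FSARun Au v s s''
  | cons {a v s s' s''} : (s, some a, s') ∈ Au.trans → FSARun Au v s' s'' →
      FSARun Au (a :: v) s s''

/-- The language of an FSA. -/
def FSALang {S A : Type*} (Au : FSA S A) : Set (List A) :=
  { v | ∃ s ∈ Au.init, ∃ s' ∈ Au.final, FSARun Au v s s' }

/-- A vector addition system with states of dimension `n`. -/
structure VASS (n : ℕ) (S A : Type*) where
  δ : S → A → S × (Fin n → ℤ)
  s0 : S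
  v0 : Fin n → ℕ

/-- A step of a VASS: `(q₁,u₁) →ᵃ (q₂,u₂)` iff `δ(q₁,a) = (q₂, u₂ - u₁)`. -/
def VStep {n : ℕ} {S A : Type*} (V : VASS n S A) (a : A) :
    (S × (Fin n → ℕ)) → (S × (Fin n → ℕ)) → Prop :=
  fun c c' => (V.δ c.1 a).1 = c'.1 ∧ ∀ i, (c'.2 i : ℤ) = (c.2 i : ℤ) + (V.δ c.1 a).2 i

/-- Reachability in the transition system of a VASS. -/
def VReaches {n : ℕ} {S A : Type*} (V : VASS n S A) :
    (S × (Fin n → ℕ)) → (S × (Fin n → ℕ)) → Prop :=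
  Relation.ReflTransGen (fun c c' => ∃ a, VStep V a c c')

/-- A state `s` is reachable by the VASS `V`. -/
def VStateReachable {n : ℕ} {S A : Type*} (V : VASS n S A) (s : S) : Prop :=
  ∃ u, VReaches V (V.s0, V.v0) (s, u)

/-- The `i`-th unit vector. -/
def unitVec {m : ℕ} (i : Fin m) : Fin m → ℤ := fun j => if j = i then 1 else 0

/-- The `i`-lift of a rule of a DCFS, used to build the switch-number-recording DCFS.
A stack symbol of the recording system is a pair `(w, i)` with `w ∈ Γ ∪ {ε}`
(modelled as `Option Γ`) and `i` a recorded switch number in `{0,…,k+1}`; the pushed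
word `u` of a DCFS rule (of length at most 1) is represented by `u.head? : Option Γ`. -/
def liftRule {Q Γ : Type*} (i : ℕ) : Rule Q Γ → Rule Q (Option Γ × ℕ)
  | .cr q γ q' u α => .cr q (some γ, i) q' [(u.head?, i)] (α.map fun a => (some a, i + 1))
  | .intr q γ q' u => .intr q (some γ, i) q' [(u.head?, i + 1)]
  | .res q γ q' => .res q (some γ, i) q'

/-- The switch-number-recording DCFS `M'` constructed from a DCFS `M` and `k`. -/
def recordDCFS {Q Γ : Type*} (M : DCPS Q Γ) (k : ℕ) : DCPS Q (Option Γ × ℕ) where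
  rules := { r' | ∃ i ≤ k, ∃ r ∈ M.rules, r' = liftRule i r }
  q0 := M.q0
  γ0 := (some M.γ0, 0)

/-!
In a DCFS every stack has length at most one, so pairing the stack of a thread with its switch
number loses no information and turns each step of a thread with switch number `i ≤ k` into the
`i`-lift of its rule. Such a thread only creates threads with switch number at most `k + 1`, which
bounds the switch numbers that can occur among the pending threads.
-/

section

variable {Q Γ : Type*} {M : DCPS Q Γ} {r : Rule Q Γ} {c d : Config Q Γ} {I J : Set ℕ} {k : ℕ}

theorem mem_support_spawnOf {α : Option Γ} {i : ℕ} {p : List Γ × ℕ} :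
    p ∈ (spawnOf α i).support ↔ ∃ a ∈ α, p = ([a], i + 1) := by
  classical
  cases α <;> simp [spawnOf, eq_comm]

@[simp]
theorem activeIn_none {q : Q} {V : (List Γ × ℕ) →₀ ℕ} : ¬ ActiveIn I ⟨q, none, V⟩ := by
  simp [ActiveIn]

@[simp]
theorem activeIn_some {q : Q} {w : List Γ} {i : ℕ} {V : (List Γ × ℕ) →₀ ℕ} :
    ActiveIn I ⟨q, some (w, i), V⟩ ↔ i ∈ I := by
  simp [ActiveIn]

theorem ReachesIn.reaches (h : ReachesIn M I c d) : Reaches M c d :=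
  Relation.ReflTransGen.mono (fun _ _ ⟨r, hr⟩ => ⟨r, hr.1⟩) _ _ h

theorem StepIn.idle_switch_mem (hIJ : ∀ i ∈ I, i + 1 ∈ J) (h : StepIn M I r c d)
    (hc : ∀ p ∈ c.idle.support, p.2 ∈ J) : ∀ p ∈ d.idle.support, p.2 ∈ J := by
  classical
  obtain ⟨h, hI⟩ := h
  intro p hp
  cases h with
  | @cr _ _ _ _ _ _ i =>
    have hi : i ∈ I := by simpa using hI
    rcases Finset.mem_union.1 (Finsupp.support_add hp) with hp | hp
    · exact hc p hp
    · obtain ⟨a, -, rfl⟩ := mem_support_spawnOf.1 hp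
      exact hIJ _ hi
  | @intr _ _ _ _ _ i =>
    have hi : i ∈ I := by simpa using hI
    rcases Finset.mem_union.1 (Finsupp.support_add hp) with hp | hp
    · exact hc p hp
    · obtain ⟨rfl, -⟩ := (Finsupp.mem_support_single _ _ _).1 hp
      exact hIJ _ hi
  | res => exact hc p (Finsupp.support_mono le_self_add hp)

theorem ReachesIn.idle_switch_mem (hIJ : ∀ i ∈ I, i + 1 ∈ J) (h : ReachesIn M I c d)
    (hc : ∀ p ∈ c.idle.support, p.2 ∈ J) : ∀ p ∈ d.idle.support, p.2 ∈ J := by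
  induction h with
  | refl => exact hc
  | tail _ hs ih => exact hs.choose_spec.idle_switch_mem hIJ ih

theorem idle_switch_le_of_reachesIn (h : ReachesIn M {i | i ≤ k} (initConfig M) c) :
    ∀ p ∈ c.idle.support, p.2 ≤ k + 1 := by
  refine h.idle_switch_mem (J := Set.Iic (k + 1)) (fun _ => Nat.succ_le_succ) fun p hp => ?_
  obtain ⟨rfl, -⟩ := (Finsupp.mem_support_single _ _ _).1 hp
  exact Nat.zero_le _

/-- A configuration is flat if all its threads have stacks of length at most one, i.e. stack
contents in `Γ ∪ {ε}`; runs of a DCFS visit only such configurations. -/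
structure Config.IsFlat (c : Config Q Γ) : Prop where
  active : ∀ p ∈ c.active, p.1.length ≤ 1
  idle : ∀ p ∈ c.idle.support, p.1.length ≤ 1

theorem isFlat_initConfig (M : DCPS Q Γ) : (initConfig M).IsFlat where
  active := by simp [initConfig]
  idle p hp := by
    obtain ⟨rfl, -⟩ := (Finsupp.mem_support_single _ _ _).1 hp
    exact le_rfl

theorem Step.isFlat (hM : IsDCFS M) (h : Step M r c d) (hc : c.IsFlat) : d.IsFlat := by
  classical
  cases h with
  | @cr q γ q' u α w i V hr =>
    have hu : u.length ≤ 1 := hM _ hr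
    have hw : w = [] := by simpa using hc.active _ rfl
    refine ⟨by simpa [hw] using hu, fun p hp => ?_⟩
    rcases Finset.mem_union.1 (Finsupp.support_add hp) with hp | hp
    · exact hc.idle p hp
    · obtain ⟨a, -, rfl⟩ := mem_support_spawnOf.1 hp
      exact le_rfl
  | @intr q γ q' u w i V hr =>
    have hu : u.length ≤ 1 := hM _ hr
    have hw : w = [] := by simpa using hc.active _ rfl
    refine ⟨by simp, fun p hp => ?_⟩
    rcases Finset.mem_union.1 (Finsupp.support_add hp) with hp | hp
    · exact hc.idle p hp
    · obtain ⟨rfl, -⟩ := (Finsupp.mem_support_single _ _ _).1 hp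
      simpa [hw] using hu
  | @res q γ q' w i V hr =>
    have hw : (γ :: w).length ≤ 1 := hc.idle (γ :: w, i) (by simp)
    exact ⟨by simpa using hw, fun p hp => hc.idle p (Finsupp.support_mono le_self_add hp)⟩

theorem Reaches.isFlat (hM : IsDCFS M) (h : Reaches M c d) (hc : c.IsFlat) : d.IsFlat := by
  induction h with
  | refl => exact hc
  | tail _ hs ih => exact hs.choose_spec.isFlat hM ih

/-- The local configuration `((w, i), i)` of the recording DCFS that stands for the local
configuration `(w, i)`. Only the top of the stack is kept, so this is faithful on stacks of length
at most one. -/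
def recordLoc (p : List Γ × ℕ) : List (Option Γ × ℕ) × ℕ :=
  ([(p.1.head?, p.2)], p.2)

@[simp]
theorem recordLoc_toList (w : Option Γ) (i : ℕ) : recordLoc (w.toList, i) = ([(w, i)], i) := by
  simp [recordLoc]

theorem recordLoc_injOn : Set.InjOn (recordLoc (Γ := Γ)) {p | p.1.length ≤ 1} := by
  have toList_head? {l : List Γ} (hl : l.length ≤ 1) : l.head?.toList = l := by
    rw [← List.take_one, List.take_of_length_le hl]
  rintro ⟨w, i⟩ hw ⟨w', i'⟩ hw' h
  obtain ⟨hhead, rfl⟩ : w.head? = w'.head? ∧ i = i' := by simpa [recordLoc] using h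
  exact Prod.ext (by rw [← toList_head? hw, hhead, toList_head? hw']) rfl

/-- The configuration of the recording DCFS that corresponds to `c`: every thread of `c` is replaced
by its image under `recordLoc`. -/
noncomputable def Config.record (c : Config Q Γ) : Config Q (Option Γ × ℕ) :=
  ⟨c.state, c.active.map recordLoc, c.idle.mapDomain recordLoc⟩

theorem record_initConfig (M : DCPS Q Γ) (k : ℕ) :
    (initConfig M).record = initConfig (recordDCFS M k) := by
  simp [Config.record, initConfig, recordDCFS, recordLoc, Finsupp.mapDomain_single]

theorem Config.IsFlat.record_idle_apply (hc : c.IsFlat) (w : Option Γ) (i : ℕ) :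
    c.record.idle ([(w, i)], i) = c.idle (w.toList, i) := by
  rw [← recordLoc_toList]
  exact Finsupp.mapDomain_apply' _ c.idle hc.idle recordLoc_injOn w.length_toList_le

theorem Config.exists_of_record_idle_ne_zero {loc : List (Option Γ × ℕ) × ℕ}
    (h : c.record.idle loc ≠ 0) : ∃ p ∈ c.idle.support, recordLoc p = loc := by
  classical
  exact Finset.mem_image.1 (Finsupp.mapDomain_support (Finsupp.mem_support_iff.2 h))

theorem mapDomain_recordLoc_spawnOf (α : Option Γ) (i : ℕ) :
    (spawnOf α i).mapDomain recordLoc = spawnOf (α.map fun a => (some a, i + 1)) i := by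
  cases α <;> simp [spawnOf, recordLoc, Finsupp.mapDomain_single]

theorem liftRule_mem_recordDCFS {i : ℕ} (hi : i ≤ k) (hr : r ∈ M.rules) :
    liftRule i r ∈ (recordDCFS M k).rules :=
  ⟨i, hi, r, hr, rfl⟩

theorem StepIn.exists_step_record (h : StepIn M {i | i ≤ k} r c d) (hc : c.IsFlat) :
    ∃ i ≤ k, Step (recordDCFS M k) (liftRule i r) c.record d.record := by
  obtain ⟨h, hI⟩ := h
  cases h with
  | @cr q γ q' u α w i V hr =>
    have hi : i ≤ k := by simpa using hI
    obtain rfl : w = [] := by simpa using hc.active _ rfl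
    refine ⟨i, hi, ?_⟩
    simpa [liftRule, Config.record, recordLoc, Finsupp.mapDomain_add,
      mapDomain_recordLoc_spawnOf] using
      Step.cr (w := []) (V := V.mapDomain recordLoc) (liftRule_mem_recordDCFS hi hr)
  | @intr q γ q' u w i V hr =>
    have hi : i ≤ k := by simpa using hI
    obtain rfl : w = [] := by simpa using hc.active _ rfl
    refine ⟨i, hi, ?_⟩
    simpa [liftRule, Config.record, recordLoc, Finsupp.mapDomain_add,
      Finsupp.mapDomain_single] using
      Step.intr (w := []) (i := i) (V := V.mapDomain recordLoc) (liftRule_mem_recordDCFS hi hr)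
  | @res q γ q' w i V hr =>
    have hi : i ≤ k := by simpa using hI
    refine ⟨i, hi, ?_⟩
    simpa [liftRule, Config.record, recordLoc, Finsupp.mapDomain_add,
      Finsupp.mapDomain_single] using
      Step.res (w := []) (i := i) (V := V.mapDomain recordLoc) (liftRule_mem_recordDCFS hi hr)

theorem ReachesIn.reaches_record (hM : IsDCFS M) (h : ReachesIn M {i | i ≤ k} c d)
    (hc : c.IsFlat) : Reaches (recordDCFS M k) c.record d.record := by
  induction h with
  | refl => exact .refl
  | tail hcb hs ih =>
    have hb := (ReachesIn.reaches hcb).isFlat hM hc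
    obtain ⟨r, hs⟩ := hs
    obtain ⟨i, -, hstep⟩ := hs.exists_step_record hb
    exact ih.tail ⟨_, hstep⟩

theorem record_simulates_bounded_general (hM : IsDCFS M)
    (hreach : ReachesIn M {i | i ≤ k} (initConfig M) c) :
    ∃ c' : Config Q (Option Γ × ℕ),
      Reaches (recordDCFS M k) (initConfig (recordDCFS M k)) c' ∧
      c'.state = c.state ∧
      (c.active = none → c'.active = none) ∧
      (∀ (w : Option Γ) (i : ℕ), c.active = some (w.toList, i) →
        c'.active = some ([(w, i)], i)) ∧
      (∀ (w' : Option Γ) (j' : ℕ), c'.idle ([(w', j')], j') = c.idle (w'.toList, j')) ∧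
      (∀ loc : List (Option Γ × ℕ) × ℕ,
        (¬ ∃ (w' : Option Γ) (j' : ℕ), j' ≤ k + 1 ∧ loc = ([(w', j')], j')) →
        c'.idle loc = 0) := by
  have hinit := isFlat_initConfig M
  have hflat : c.IsFlat := hreach.reaches.isFlat hM hinit
  have hrun := hreach.reaches_record hM hinit
  rw [record_initConfig] at hrun
  refine ⟨c.record, hrun, rfl, fun h => ?_, fun w i h => ?_, hflat.record_idle_apply,
    fun loc hloc => ?_⟩
  · simp [Config.record, h]
  · simp [Config.record, h]
  · by_contra hne
    obtain ⟨p, hp, rfl⟩ := Config.exists_of_record_idle_ne_zero hne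
    exact hloc ⟨p.1.head?, p.2, idle_switch_le_of_reachesIn hreach p hp, rfl⟩

end

/-- Every `[0,k]`-bounded run of the DCFS `M` can be simulated by a
run of the switch-number-recording DCFS `M'` reaching the corresponding configuration. -/
theorem record_simulates_bounded
    (Q Γ : Type) [Fintype Q] [Fintype Γ] (M : DCPS Q Γ)
    (hfin : M.rules.Finite) (hdcfs : IsDCFS M) (k : ℕ)
    (c : Config Q Γ)
    (hreach : ReachesIn M {i | i ≤ k} (initConfig M) c) :
    ∃ c' : Config Q (Option Γ × ℕ),
      Reaches (recordDCFS M k) (initConfig (recordDCFS M k)) c' ∧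
      c'.state = c.state ∧
      (c.active = none → c'.active = none) ∧
      (∀ (w : Option Γ) (i : ℕ), i ≤ k → c.active = some (w.toList, i) →
        c'.active = some ([(w, i)], i)) ∧
      (∀ (w' : Option Γ) (j' : ℕ), j' ≤ k + 1 →
        c'.idle ([(w', j')], j') = c.idle (w'.toList, j')) ∧
      (∀ loc : List (Option Γ × ℕ) × ℕ,
        (¬ ∃ (w' : Option Γ) (j' : ℕ), j' ≤ k + 1 ∧ loc = ([(w', j')], j')) →
        c'.idle loc = 0) := by
  obtain ⟨c', hrun, hstate, hnone, hsome, hidle, hzero⟩ :=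
    record_simulates_bounded_general hdcfs hreach
  exact ⟨c', hrun, hstate, hnone, fun w i _ => hsome w i, fun w j _ => hidle w j, hzero⟩

end DCPSFormal
end

section
/- Let M=(Q,Γ,Δ,q₀,γ₀) be a DCFS with Γ={γ₀,…,γ_n}, and let V be the VASS constructed from M. Then for every q∈Q: q is reachable by M if and only if the state (q,⊥) is reachable by V. -/
namespace DCPSFormal

/-- States of the VASS constructed from a DCFS: either the halting state `p_halt`,
or a pair of a global state of the DCFS and the stack content of the active thread
(`none` = no active thread, `some w` with `w ∈ Γ ∪ {ε}` modelled as `Option Γ`). -/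
inductive VState (Q Γ : Type*) where
  | halt : VState Q Γ
  | st : Q → Option (Option Γ) → VState Q Γ

/-- The counter coordinate associated with a stack content `w ∈ Γ ∪ {ε}`:
symbol `γ_j` gets coordinate `j` and `ε` gets the last coordinate. -/
def coordOf {n : ℕ} : Option (Fin (n + 1)) → Fin (n + 2)
  | some γ => γ.castSucc
  | none => Fin.last (n + 1)

/-- The VASS constructed from a DCFS `M` over states `Q` and stack alphabet
`Γ = {γ₀,…,γ_n}` (modelled as `Fin (n+1)`); its dimension is `n + 2`, its alphabet is
the set of rules, and all remaining cases of the displacement function go to `p_halt`. -/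
def vassOf {n : ℕ} {Q : Type*} [DecidableEq Q] (M : DCPS Q (Fin (n + 1)))
    [DecidablePred (· ∈ M.rules)] :
    VASS (n + 2) (VState Q (Fin (n + 1))) (Rule Q (Fin (n + 1))) where
  δ := fun s t =>
    match s, t with
    | .st q (some (some γ)), .cr q₁ γ₁ q' u α =>
        if Rule.cr q₁ γ₁ q' u α ∈ M.rules ∧ q₁ = q ∧ γ₁ = γ then
          (.st q' (some u.head?),
            match α with
            | none => 0
            | some a => unitVec (coordOf (some a)))
        else (.halt, 0)
    | .st q (some (some γ)), .intr q₁ γ₁ q' u =>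
        if Rule.intr q₁ γ₁ q' u ∈ M.rules ∧ q₁ = q ∧ γ₁ = γ then
          (.st q' none, unitVec (coordOf u.head?))
        else (.halt, 0)
    | .st q none, .res q₁ γ q' =>
        if Rule.res q₁ γ q' ∈ M.rules ∧ q₁ = q then
          (.st q' (some (some γ)), - unitVec (coordOf (some γ)))
        else (.halt, 0)
    | _, _ => (.halt, 0)
  s0 := .st M.q0 none
  v0 := fun i => if i = coordOf (some M.γ0) then 1 else 0

/-- The number of pending threads of a configuration with a given stack content
(summed over all switch numbers). -/
noncomputable def countStack {Q Γ : Type*} [DecidableEq Γ] (c : Config Q Γ)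
    (w : List Γ) : ℕ :=
  c.idle.sum fun loc m => if loc.1 = w then m else 0

/-- The simulation map `μ` from configurations of the DCFS `M` to configurations
of the VASS constructed from `M`. -/
noncomputable def muV {Q : Type*} {n : ℕ} (c : Config Q (Fin (n + 1))) :
    VState Q (Fin (n + 1)) × (Fin (n + 2) → ℕ) :=
  ((match c.active with
    | none => .st c.state none
    | some (w, _) => .st c.state (some w.head?)),
   fun i => if h : (i : ℕ) < n + 1 then countStack c [⟨(i : ℕ), h⟩] else countStack c [])

/-! A rule of a DCFS replaces the top of a stack by a word of length at most one, so no thread ever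
holds more than one symbol and the simulation map `muV` only forgets switch numbers, which no rule
tests. Hence every step of `M` projects to the step of the VASS with the same label. Conversely, a
VASS step that avoids `halt` has its rule enabled at every configuration above it: the control state
exposes the top of the active stack, and a positive counter exhibits a pending thread to resume.
As the VASS is deterministic, the resulting step of `M` projects to the given one. -/

section Shallow

variable {Q Γ : Type*} {M : DCPS Q Γ} {r : Rule Q Γ} {c c' : Config Q Γ}

/-- The invariant of the runs of a DCFS: every thread, active or pending, has at most one symbol on
its stack. -/
def IsShallow (c : Config Q Γ) : Prop :=
  (∀ t ∈ c.active, t.1.length ≤ 1) ∧ ∀ t ∈ c.idle.support, t.1.length ≤ 1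

theorem isShallow_initConfig (M : DCPS Q Γ) : IsShallow (initConfig M) := by
  simp [IsShallow, initConfig]

theorem length_le_one_of_mem_support_spawnOf {α : Option Γ} {i : ℕ} {t : List Γ × ℕ}
    (ht : t ∈ (spawnOf α i).support) : t.1.length ≤ 1 := by
  cases α with
  | none => simp [spawnOf] at ht
  | some a =>
    obtain rfl := Finset.mem_singleton.1 (Finsupp.support_single_subset ht)
    exact le_rfl

theorem Step.mem_rules (h : Step M r c c') : r ∈ M.rules := by
  cases h <;> assumption

theorem Step.isShallow (h : Step M r c c') (hM : IsDCFS M) (hc : IsShallow c) :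
    IsShallow c' := by
  classical
  obtain ⟨hactive, hidle⟩ := hc
  cases h with
  | @cr q γ q' u α w i V hr =>
    have hu : u.length ≤ 1 := hM _ hr
    obtain rfl : w = [] := by simpa using hactive _ rfl
    refine ⟨fun t ht => ?_, fun t ht => ?_⟩
    · obtain rfl := Option.mem_some_iff.1 ht
      simpa using hu
    · rcases Finset.mem_union.1 (Finsupp.support_add ht) with hV | hspawn
      · exact hidle t hV
      · exact length_le_one_of_mem_support_spawnOf hspawn
  | @intr q γ q' u w i V hr =>
    have hu : u.length ≤ 1 := hM _ hr
    obtain rfl : w = [] := by simpa using hactive _ rfl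
    refine ⟨by simp, fun t ht => ?_⟩
    rcases Finset.mem_union.1 (Finsupp.support_add ht) with hV | hnew
    · exact hidle t hV
    · obtain rfl := Finset.mem_singleton.1 (Finsupp.support_single_subset hnew)
      simpa using hu
  | @res q γ q' w i V hr =>
    refine ⟨fun t ht => ?_, fun t ht => hidle t (Finsupp.support_mono le_self_add ht)⟩
    obtain rfl := Option.mem_some_iff.1 ht
    exact hidle _ (by simp)

theorem Reaches.isShallow (h : Reaches M c c') (hM : IsDCFS M) (hc : IsShallow c) :
    IsShallow c' := by
  induction h with
  | refl => exact hc
  | tail _ hstep ih =>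
    obtain ⟨r, hr⟩ := hstep
    exact hr.isShallow hM ih

end Shallow

theorem VStep.unique {m : ℕ} {S A : Type*} {V : VASS m S A} {a : A} {v v₁ v₂ : S × (Fin m → ℕ)}
    (h₁ : VStep V a v v₁) (h₂ : VStep V a v v₂) : v₁ = v₂ := by
  refine Prod.ext (h₁.1.symm.trans h₂.1) (funext fun i => ?_)
  have hcast : (v₁.2 i : ℤ) = v₂.2 i := (h₁.2 i).trans (h₂.2 i).symm
  exact_mod_cast hcast

section ConstructedVASS

variable {n : ℕ} {Q : Type*}

/-- The only control state of the constructed VASS at which a rule does not lead to `halt`. -/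
def Rule.source : Rule Q (Fin (n + 1)) → VState Q (Fin (n + 1))
  | .cr q γ _ _ _ => .st q (some (some γ))
  | .intr q γ _ _ => .st q (some (some γ))
  | .res q _ _ => .st q none

/-- The control state of the constructed VASS to which a rule leads from its source. A pushed word,
having length at most one, is encoded by its head. -/
def Rule.target : Rule Q (Fin (n + 1)) → VState Q (Fin (n + 1))
  | .cr _ _ q' u _ => .st q' (some u.head?)
  | .intr _ _ q' _ => .st q' none
  | .res _ γ q' => .st q' (some (some γ))

/-- The effect of a rule on the counters of the constructed VASS when taken from its source. -/
def Rule.displacement : Rule Q (Fin (n + 1)) → Fin (n + 2) → ℤ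
  | .cr _ _ _ _ none => 0
  | .cr _ _ _ _ (some a) => unitVec (coordOf (some a))
  | .intr _ _ _ u => unitVec (coordOf u.head?)
  | .res _ γ _ => -unitVec (coordOf (some γ))

theorem Rule.source_ne_halt (r : Rule Q (Fin (n + 1))) : r.source ≠ .halt := by
  cases r <;> simp [Rule.source]

variable [DecidableEq Q] {M : DCPS Q (Fin (n + 1))} [DecidablePred (· ∈ M.rules)]
  {r : Rule Q (Fin (n + 1))} {s : VState Q (Fin (n + 1))}

theorem vassOf_delta_source (hr : r ∈ M.rules) :
    (vassOf M).δ r.source r = (r.target, r.displacement) := by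
  rcases r with ⟨q, γ, q', u, _ | a⟩ | _ | _ <;>
    simp [vassOf, Rule.source, Rule.target, Rule.displacement, hr]

theorem mem_rules_and_source_eq_of_vassOf_delta_ne_halt (h : ((vassOf M).δ s r).1 ≠ .halt) :
    r ∈ M.rules ∧ r.source = s := by
  rcases s with _ | ⟨q, _ | _ | γ⟩ <;> cases r <;>
    first
    | exact absurd rfl h
    | simpa [vassOf, Rule.source, apply_ite Prod.fst] using h

end ConstructedVASS

section Counters

variable {n : ℕ} {Q : Type*} {c c' : Config Q (Fin (n + 1))}

theorem coordOf_injective : Function.Injective (coordOf (n := n)) := by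
  rintro (_ | a) (_ | b) h <;> simp_all [coordOf, Fin.ext_iff] <;> omega

theorem coordOf_surjective : Function.Surjective (coordOf (n := n)) :=
  Fin.lastCases ⟨none, rfl⟩ fun j => ⟨some j, rfl⟩

theorem toList_head?_of_length_le_one {α : Type*} {w : List α} (hw : w.length ≤ 1) :
    w.head?.toList = w := by
  rw [← List.take_one, List.take_of_length_le hw]

theorem countStack_eq_mapDomain {Γ : Type*} [DecidableEq Γ] (c : Config Q Γ) (w : List Γ) :
    countStack c w = c.idle.mapDomain Prod.fst w := by
  simp [countStack, Finsupp.mapDomain, Finsupp.sum_apply, Finsupp.single_apply]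

theorem muV_snd_coordOf (c : Config Q (Fin (n + 1))) (o : Option (Fin (n + 1))) :
    (muV c).2 (coordOf o) = c.idle.mapDomain Prod.fst o.toList := by
  cases o with
  | none => simp [muV, coordOf, countStack_eq_mapDomain]
  | some γ => simp [muV, coordOf, countStack_eq_mapDomain, γ.is_le]

theorem muV_snd_of_idle_eq_add_single {w : List (Fin (n + 1))} {i : ℕ} (hw : w.length ≤ 1)
    (h : c'.idle = c.idle + Finsupp.single (w, i) 1) (k : Fin (n + 2)) :
    ((muV c').2 k : ℤ) = (muV c).2 k + unitVec (coordOf w.head?) k := by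
  obtain ⟨o, rfl⟩ := coordOf_surjective k
  have hiff : w = o.toList ↔ o = w.head? :=
    ⟨fun hwo => by rw [hwo, Option.head?_toList],
      fun how => by rw [how, toList_head?_of_length_le_one hw]⟩
  simp [muV_snd_coordOf, h, Finsupp.mapDomain_add, Finsupp.mapDomain_single,
    Finsupp.single_apply, unitVec, coordOf_injective.eq_iff, hiff]

theorem exists_idle_eq_add_single_of_muV_snd_pos {o : Option (Fin (n + 1))}
    (h : 0 < (muV c).2 (coordOf o)) :
    ∃ i V, c.idle = V + Finsupp.single (o.toList, i) 1 := by
  rw [muV_snd_coordOf] at h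
  obtain ⟨⟨w, i⟩, hmem, rfl⟩ := Finset.mem_image.1
    (Finsupp.mapDomain_support (Finsupp.mem_support_iff.2 h.ne'))
  have hle : Finsupp.single (o.toList, i) 1 ≤ c.idle :=
    Finsupp.single_le_iff.2 (Nat.one_le_iff_ne_zero.2 (Finsupp.mem_support_iff.1 hmem))
  exact ⟨i, _, (tsub_add_cancel_of_le hle).symm⟩

end Counters

section Simulation

variable {n : ℕ} {Q : Type*} {M : DCPS Q (Fin (n + 1))} {r : Rule Q (Fin (n + 1))}
  {c c' : Config Q (Fin (n + 1))} {v : VState Q (Fin (n + 1)) × (Fin (n + 2) → ℕ)}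

theorem muV_fst_eq_st_none_iff {q : Q} :
    (muV c).1 = .st q none ↔ c.active = none ∧ c.state = q := by
  rcases c with ⟨p, _ | ⟨w, i⟩, V⟩ <;> simp [muV]

theorem Step.muV_fst_eq_source (h : Step M r c c') : (muV c).1 = r.source := by
  cases h <;> rfl

theorem Step.muV_fst_eq_target (h : Step M r c c') (hc : IsShallow c) :
    (muV c').1 = r.target := by
  cases h with
  | @cr q γ q' u α w i V hr =>
    obtain rfl : w = [] := by simpa using hc.1 _ rfl
    simp [muV, Rule.target]
  | intr => rfl
  | res => rfl

theorem Step.muV_snd_eq_add_displacement (h : Step M r c c') (hM : IsDCFS M)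
    (hc : IsShallow c) (k : Fin (n + 2)) :
    ((muV c').2 k : ℤ) = (muV c).2 k + r.displacement k := by
  cases h with
  | @cr q γ q' u α w i V hr =>
    cases α with
    | none => simp [muV, countStack, spawnOf, Rule.displacement]
    | some a => exact muV_snd_of_idle_eq_add_single (w := [a]) le_rfl rfl k
  | @intr q γ q' u w i V hr =>
    have hu : u.length ≤ 1 := hM _ hr
    obtain rfl : w = [] := by simpa using hc.1 _ rfl
    rw [List.append_nil]
    exact muV_snd_of_idle_eq_add_single hu rfl k
  | @res q γ q' w i V hr =>
    obtain rfl : w = [] := by simpa using hc.2 (γ :: w, i) (by simp)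
    have hadd := muV_snd_of_idle_eq_add_single (c := ⟨q', some ([γ], i), V⟩)
      (c' := ⟨q, none, V + Finsupp.single ([γ], i) 1⟩) le_rfl rfl k
    rw [hadd]
    exact (add_neg_cancel_right _ _).symm

theorem exists_step_of_displacement_nonneg (hr : r ∈ M.rules) (hsource : r.source = (muV c).1)
    (hnonneg : ∀ k, 0 ≤ ((muV c).2 k : ℤ) + r.displacement k) : ∃ c', Step M r c c' := by
  obtain ⟨q, _ | ⟨_ | ⟨γ, w⟩, i⟩, V⟩ := c <;> cases r <;>
    simp only [muV, Rule.source, List.head?_nil, List.head?_cons, VState.st.injEq, reduceCtorEq,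
      Option.some.injEq, and_true, and_false] at hsource
  case none.res p γ q' =>
    subst hsource
    have hpos := hnonneg (coordOf (some γ))
    simp only [Rule.displacement, Pi.neg_apply, unitVec, if_true] at hpos
    obtain ⟨i, W, rfl⟩ := exists_idle_eq_add_single_of_muV_snd_pos
      (c := ⟨p, none, V⟩) (o := some γ) (by omega)
    exact ⟨_, Step.res hr⟩
  case some.cons.cr =>
    obtain ⟨rfl, rfl⟩ := hsource
    exact ⟨_, Step.cr hr⟩
  case some.cons.intr =>
    obtain ⟨rfl, rfl⟩ := hsource
    exact ⟨_, Step.intr hr⟩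

variable [DecidableEq Q] [DecidablePred (· ∈ M.rules)]

theorem muV_initConfig (M : DCPS Q (Fin (n + 1))) [DecidablePred (· ∈ M.rules)] :
    muV (initConfig M) = ((vassOf M).s0, (vassOf M).v0) := by
  refine Prod.ext rfl (funext fun k => ?_)
  obtain ⟨o, rfl⟩ := coordOf_surjective k
  simp [muV_snd_coordOf, initConfig, vassOf, Finsupp.mapDomain_single, Finsupp.single_apply,
    coordOf_injective.eq_iff, eq_comm (b := o.toList)]

theorem Step.vstep_muV (h : Step M r c c') (hM : IsDCFS M) (hc : IsShallow c) :
    VStep (vassOf M) r (muV c) (muV c') := by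
  rw [VStep, h.muV_fst_eq_source, vassOf_delta_source h.mem_rules]
  exact ⟨(h.muV_fst_eq_target hc).symm, h.muV_snd_eq_add_displacement hM hc⟩

theorem exists_step_of_vstep_muV (hM : IsDCFS M) (hc : IsShallow c)
    (h : VStep (vassOf M) r (muV c) v) (hv : v.1 ≠ .halt) :
    ∃ c', Step M r c c' ∧ muV c' = v := by
  obtain ⟨hr, hsource⟩ := mem_rules_and_source_eq_of_vassOf_delta_ne_halt (h.1 ▸ hv)
  have hnonneg (k : Fin (n + 2)) : 0 ≤ ((muV c).2 k : ℤ) + r.displacement k := by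
    have hk := h.2 k
    rw [← hsource, vassOf_delta_source hr] at hk
    exact hk ▸ Int.natCast_nonneg _
  obtain ⟨c', hstep⟩ := exists_step_of_displacement_nonneg hr hsource hnonneg
  exact ⟨c', hstep, (hstep.vstep_muV hM hc).unique h⟩

theorem Reaches.vreaches_muV (h : Reaches M c c') (hM : IsDCFS M) (hc : IsShallow c) :
    VReaches (vassOf M) (muV c) (muV c') := by
  induction h with
  | refl => exact .refl
  | tail hreach hstep ih =>
    obtain ⟨r, hr⟩ := hstep
    exact ih.tail ⟨r, hr.vstep_muV hM (Reaches.isShallow hreach hM hc)⟩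

theorem exists_reaches_of_vreaches_muV (hM : IsDCFS M) (hc : IsShallow c)
    (h : VReaches (vassOf M) (muV c) v) (hv : v.1 ≠ .halt) :
    ∃ c', Reaches M c c' ∧ muV c' = v := by
  induction h with
  | refl => exact ⟨c, .refl, rfl⟩
  | @tail v₁ v₂ _ hstep ih =>
    obtain ⟨r, hr⟩ := hstep
    have hv₁ : v₁.1 ≠ .halt := by
      have hsource : r.source = v₁.1 :=
        (mem_rules_and_source_eq_of_vassOf_delta_ne_halt (hr.1 ▸ hv)).2
      exact hsource ▸ r.source_ne_halt
    obtain ⟨c₁, hreach, rfl⟩ := ih hv₁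
    obtain ⟨c₂, hstep₂, rfl⟩ := exists_step_of_vstep_muV hM (hreach.isShallow hM hc) hr hv
    exact ⟨c₂, hreach.tail ⟨r, hstep₂⟩, rfl⟩

end Simulation

theorem sr_iff_vass_reachable_general {n : ℕ} {Q : Type*} [DecidableEq Q]
    (M : DCPS Q (Fin (n + 1))) [DecidablePred (· ∈ M.rules)] (hM : IsDCFS M) (q : Q) :
    StateReachable M q ↔ VStateReachable (vassOf M) (.st q none) := by
  rw [StateReachable, VStateReachable, ← muV_initConfig]
  have hinit := isShallow_initConfig M
  constructor
  · rintro ⟨c, hreach, hc⟩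
    refine ⟨(muV c).2, ?_⟩
    rw [← muV_fst_eq_st_none_iff.2 hc]
    exact hreach.vreaches_muV hM hinit
  · rintro ⟨u, hu⟩
    obtain ⟨c, hreach, hc⟩ := exists_reaches_of_vreaches_muV hM hinit hu (by simp)
    exact ⟨c, hreach, muV_fst_eq_st_none_iff.1 (congrArg Prod.fst hc)⟩

/-- For a DCFS `M` with stack alphabet `Γ = {γ₀,…,γ_n}` and the VASS
`V` constructed from it, a state `q` is reachable by `M` iff `(q,⊥)` is reachable by `V`. -/
theorem sr_iff_vass_reachable
    (n : ℕ) (Q : Type) [Fintype Q] [DecidableEq Q]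
    (M : DCPS Q (Fin (n + 1))) [DecidablePred (· ∈ M.rules)]
    (hfin : M.rules.Finite) (hdcfs : IsDCFS M) (q : Q) :
    StateReachable M q ↔ VStateReachable (vassOf M) (.st q none) :=
  sr_iff_vass_reachable_general M hdcfs q

end DCPSFormal
end
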